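/- arXiv:2311.02811 — 5 statements merged into one kernel-verified Lean document; each statement's English description precedes it below -/
import Mathlib

section
/- For every natural number k and every vertex v, the label L_k(v) produced by the synchronous two-order Contour sequence lies in the connected component of v; that is, L_k(v) is reachable from v in G. -/
variable {V : Type*} [Fintype V] [LinearOrder V] [Nonempty V]

/-- One-step two-order Contour update `U`: `U(L)(w)` is the minimum of the finite
nonempty set `{L(L(w))} ∪ {L(L(v)) : v adjacent to w} ∪
{L(L(v)) : v adjacent to some u with L(u) = w}`. -/
def contourStep (G : SimpleGraph V) [DecidableRel G.Adj] (L : V → V) : V → V :=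
  fun w =>
    (insert (L (L w))
      ((G.neighborFinset w).image (fun v => L (L v)) ∪
        (Finset.univ.filter (fun v => ∃ u, G.Adj v u ∧ L u = w)).image
          (fun v => L (L v)))).min' (Finset.insert_nonempty _ _)

/-- Synchronous two-order Contour labeling sequence: `L_0 = id`, `L_{k+1} = U(L_k)`. -/
def contourSeq (G : SimpleGraph V) [DecidableRel G.Adj] : ℕ → V → V
  | 0 => id
  | (k + 1) => contourStep G (contourSeq G k)

/-- A labeling is *component-preserving* if it sends every vertex to a vertex of the same
connected component. This is the invariant maintained by the Contour iteration. -/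
def IsComponentPreserving (G : SimpleGraph V) (L : V → V) : Prop :=
  ∀ v, G.Reachable v (L v)

section

omit [Fintype V] [LinearOrder V] [Nonempty V]

protected theorem IsComponentPreserving.id (G : SimpleGraph V) : IsComponentPreserving G id :=
  fun v => .refl v

protected theorem IsComponentPreserving.comp {G : SimpleGraph V} {L M : V → V}
    (hL : IsComponentPreserving G L) (hM : IsComponentPreserving G M) :
    IsComponentPreserving G (L ∘ M) :=
  fun v => (hM v).trans (hL (M v))

end

omit [Nonempty V] in
theorem exists_contourStep_eq (G : SimpleGraph V) [DecidableRel G.Adj] (L : V → V) (w : V) :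
    ∃ v, (v = w ∨ G.Adj w v ∨ ∃ u, G.Adj v u ∧ L u = w) ∧ contourStep G L w = L (L v) := by
  have h_mem : contourStep G L w ∈
      (insert w (G.neighborFinset w ∪ Finset.univ.filter (fun v => ∃ u, G.Adj v u ∧ L u = w))).image
        (fun v => L (L v)) := by
    rw [Finset.image_insert, Finset.image_union]
    exact Finset.min'_mem _ _
  obtain ⟨v, hv, h_eq⟩ := Finset.mem_image.mp h_mem
  exact ⟨v, by simpa using hv, h_eq.symm⟩

omit [Nonempty V] in
protected theorem IsComponentPreserving.contourStep {G : SimpleGraph V} [DecidableRel G.Adj]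
    {L : V → V} (hL : IsComponentPreserving G L) :
    IsComponentPreserving G (contourStep G L) := by
  intro w
  obtain ⟨v, hv, h_eq⟩ := exists_contourStep_eq G L w
  have hwv : G.Reachable w v := by
    rcases hv with rfl | h_adj | ⟨u, h_adj, rfl⟩
    · exact .refl v
    · exact h_adj.reachable
    · have hu : G.Reachable u (L u) := hL u
      exact hu.symm.trans h_adj.symm.reachable
  rw [h_eq]
  exact hwv.trans (hL.comp hL v)

/-- For every `k` and every vertex `v`, the label `L_k(v)` lies in the connected
component of `v`, i.e. `L_k(v)` is reachable from `v` in `G`. -/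
theorem contour_label_reachable (G : SimpleGraph V) [DecidableRel G.Adj] :
    ∀ (k : ℕ) (v : V), G.Reachable v (contourSeq G k v) := by
  intro k
  induction k with
  | zero => exact IsComponentPreserving.id G
  | succ k ih => exact IsComponentPreserving.contourStep ih
end

section
/- For every natural number k and every vertex v, the minimum vertex of the connected component of v is a lower bound for L_k(v); moreover, if v itself is the minimum vertex of its connected component, then L_k(v) = v for all k. -/
variable {V : Type*} [Fintype V] [LinearOrder V] [Nonempty V]

/-- The minimum vertex of the connected component of `v`. -/
noncomputable def compMin (G : SimpleGraph V) (v : V) : V :=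
  haveI : DecidablePred (G.Reachable v) := Classical.decPred _
  (Finset.univ.filter (G.Reachable v)).min'
    ⟨v, Finset.mem_filter.mpr ⟨Finset.mem_univ v, SimpleGraph.Reachable.refl v⟩⟩

/-!
Every candidate in the minimum defining `U(L)(w)` has the form `L (L v)` with `v` in the component
of `w`, as long as `L` moves no vertex out of its component. Hence all labelings `L_k` preserve
components, which gives the lower bound. The candidate `L (L w)` gives the matching upper bound:
it equals `w` as soon as `L` fixes `w`, so the minimum of a component stays fixed.
-/

section

omit [Nonempty V]

variable {G : SimpleGraph V}

theorem compMin_le_of_reachable {v w : V} (h : G.Reachable v w) : compMin G v ≤ w :=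
  Finset.min'_le _ _ (by simpa only [Finset.mem_filter_univ] using h)

variable [DecidableRel G.Adj]

variable (G) in
theorem contourStep_le_apply_apply (L : V → V) (w : V) : contourStep G L w ≤ L (L w) :=
  Finset.min'_le _ _ (Finset.mem_insert_self _ _)

variable (G) in
theorem exists_contourStep_eq_apply_apply (L : V → V) (w : V) :
    ∃ v, (v = w ∨ G.Adj w v ∨ ∃ u, G.Adj v u ∧ L u = w) ∧ contourStep G L w = L (L v) := by
  have hmem := Finset.min'_mem (insert (L (L w))
    ((G.neighborFinset w).image (fun v => L (L v)) ∪
      (Finset.univ.filter (fun v => ∃ u, G.Adj v u ∧ L u = w)).image (fun v => L (L v))))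
    (Finset.insert_nonempty _ _)
  simp only [Finset.mem_insert, Finset.mem_union, Finset.mem_image,
    SimpleGraph.mem_neighborFinset, Finset.mem_filter_univ] at hmem
  rcases hmem with hself | ⟨v, hadj, hv⟩ | ⟨v, hlabel, hv⟩
  · exact ⟨w, .inl rfl, hself⟩
  · exact ⟨v, .inr (.inl hadj), hv.symm⟩
  · exact ⟨v, .inr (.inr hlabel), hv.symm⟩

theorem reachable_contourStep {L : V → V} (hL : ∀ v, G.Reachable v (L v)) (w : V) :
    G.Reachable w (contourStep G L w) := by
  obtain ⟨v, hsource, hstep⟩ := exists_contourStep_eq_apply_apply G L w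
  have hwv : G.Reachable w v := by
    rcases hsource with rfl | hadj | ⟨u, hadj, rfl⟩
    · exact .refl v
    · exact hadj.reachable
    · exact (hL u).symm.trans hadj.symm.reachable
  rw [hstep]
  exact hwv.trans ((hL v).trans (hL (L v)))

variable (G) in
theorem reachable_contourSeq (k : ℕ) (v : V) : G.Reachable v (contourSeq G k v) := by
  induction k generalizing v with
  | zero => exact .refl v
  | succ k ih => exact reachable_contourStep ih v

variable (G) in
theorem compMin_le_contourSeq (k : ℕ) (v : V) : compMin G v ≤ contourSeq G k v :=
  compMin_le_of_reachable (reachable_contourSeq G k v)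

theorem contourSeq_eq_self_of_compMin_eq_self {v : V} (hv : compMin G v = v) (k : ℕ) :
    contourSeq G k v = v := by
  induction k with
  | zero => rfl
  | succ k ih =>
    apply le_antisymm
    · calc
        contourSeq G (k + 1) v ≤ contourSeq G k (contourSeq G k v) :=
          contourStep_le_apply_apply G (contourSeq G k) v
        _ = v := by rw [ih, ih]
    · calc
        v = compMin G v := hv.symm
        _ ≤ contourSeq G (k + 1) v := compMin_le_contourSeq G (k + 1) v

end

/-- The minimum vertex of the connected component of `v` is a lower bound for `L_k(v)`;
moreover if `v` is the minimum of its component then `L_k(v) = v` for all `k`. -/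
theorem contour_compMin_le (G : SimpleGraph V) [DecidableRel G.Adj] :
    ∀ (k : ℕ) (v : V),
      compMin G v ≤ contourSeq G k v ∧ (compMin G v = v → contourSeq G k v = v) :=
  fun k v => ⟨compMin_le_contourSeq G k v, fun hv => contourSeq_eq_self_of_compMin_eq_self hv k⟩
end

section
/- The component-minimum map is a stationary point of the Contour update: let c : V → V send each vertex v to the minimum vertex of its connected component. Then c ∘ c = c (so the pointer graph of c is a disjoint union of stars), and U(c) = c; in particular, if L_k = c then L_j = c for all j ≥ k. -/
variable {V : Type*} [Fintype V] [LinearOrder V] [Nonempty V]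

/-!
If `L` is idempotent and constant along edges, then all the values over which the Contour update
takes its minimum at `w` are equal to `L w`: a neighbour `v` of `w` gives `L (L v) = L v = L w`,
and an edge `v u` with `L u = w` gives `L (L v) = L v = L u = L (L u) = L w`.
The component-minimum map has both properties.
-/

section

omit [Nonempty V]

theorem isLeast_compMin (G : SimpleGraph V) (v : V) :
    IsLeast {w | G.Reachable v w} (compMin G v) := by
  let _ : DecidablePred (G.Reachable v) := Classical.decPred _
  simpa [compMin] using
    Finset.isLeast_min' (Finset.univ.filter (G.Reachable v)) ⟨v, by simp⟩

theorem reachable_compMin (G : SimpleGraph V) (v : V) : G.Reachable v (compMin G v) :=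
  (isLeast_compMin G v).1

theorem compMin_eq_compMin_of_reachable {G : SimpleGraph V} {v w : V} (h : G.Reachable v w) :
    compMin G v = compMin G w :=
  le_antisymm ((isLeast_compMin G v).2 (h.trans (reachable_compMin G w)))
    ((isLeast_compMin G w).2 (h.symm.trans (reachable_compMin G v)))

theorem compMin_comp_compMin (G : SimpleGraph V) : compMin G ∘ compMin G = compMin G :=
  funext fun v => (compMin_eq_compMin_of_reachable (reachable_compMin G v)).symm

theorem contourStep_eq_or_exists (G : SimpleGraph V) [DecidableRel G.Adj] (L : V → V) (w : V) :
    contourStep G L w = L (L w) ∨ (∃ v, G.Adj w v ∧ contourStep G L w = L (L v)) ∨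
      ∃ v, (∃ u, G.Adj v u ∧ L u = w) ∧ contourStep G L w = L (L v) := by
  have hmem : contourStep G L w ∈ insert (L (L w))
      ((G.neighborFinset w).image (fun v => L (L v)) ∪
        (Finset.univ.filter (fun v => ∃ u, G.Adj v u ∧ L u = w)).image (fun v => L (L v))) :=
    Finset.min'_mem _ _
  simpa [eq_comm] using hmem

theorem isFixedPt_contourStep {G : SimpleGraph V} [DecidableRel G.Adj] {L : V → V}
    (hidem : L ∘ L = L) (hadj : ∀ ⦃u v⦄, G.Adj u v → L u = L v) :
    Function.IsFixedPt (contourStep G) L := by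
  replace hidem : ∀ v, L (L v) = L v := congrFun hidem
  funext w
  rcases contourStep_eq_or_exists G L w with h | ⟨v, hwv, h⟩ | ⟨v, ⟨u, hvu, rfl⟩, h⟩
  · rw [h, hidem]
  · rw [h, hidem, hadj hwv]
  · rw [h, hidem, hidem, hadj hvu]

theorem isFixedPt_contourStep_compMin (G : SimpleGraph V) [DecidableRel G.Adj] :
    Function.IsFixedPt (contourStep G) (compMin G) :=
  isFixedPt_contourStep (compMin_comp_compMin G)
    fun _ _ huv => compMin_eq_compMin_of_reachable huv.reachable

theorem contourSeq_eq_of_le_of_isFixedPt {G : SimpleGraph V} [DecidableRel G.Adj] {L : V → V}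
    (hL : Function.IsFixedPt (contourStep G) L) {j k : ℕ} (hkj : k ≤ j)
    (hk : contourSeq G k = L) : contourSeq G j = L := by
  induction j, hkj using Nat.le_induction with
  | base => exact hk
  | succ j _ ih => rw [contourSeq, ih, hL]

end

/-- The component-minimum map `c` is a stationary point of the Contour update:
`c ∘ c = c`, `U(c) = c`, and if `L_k = c` then `L_j = c` for all `j ≥ k`. -/
theorem compMin_stationary (G : SimpleGraph V) [DecidableRel G.Adj] :
    (compMin G ∘ compMin G) = compMin G ∧
    contourStep G (compMin G) = compMin G ∧
    (∀ k : ℕ, contourSeq G k = compMin G →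
      ∀ j : ℕ, k ≤ j → contourSeq G j = compMin G) :=
  ⟨compMin_comp_compMin G, isFixedPt_contourStep_compMin G,
    fun _ hk _ hkj => contourSeq_eq_of_le_of_isFixedPt (isFixedPt_contourStep_compMin G) hkj hk⟩
end

section
/- Ball formula for one-order label propagation: for every natural number k and every vertex v, M_k(v) equals the minimum of the set of vertices u such that there is a walk in G from v to u of length at most k (equivalently, u is in the component of v and the graph distance between u and v is at most k). -/
variable {V : Type*} [Fintype V] [LinearOrder V] [Nonempty V]

/-- One-order label-propagation step: `v ↦ min ({M v} ∪ {M u : u adjacent to v})`. -/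
def propStep (G : SimpleGraph V) [DecidableRel G.Adj] (M : V → V) : V → V :=
  fun v => (insert (M v) ((G.neighborFinset v).image M)).min' (Finset.insert_nonempty _ _)

/-- One-order label-propagation sequence: `M_0 = id`, `M_{k+1}(v) = min {M_k(u) : u = v or u adjacent to v}`. -/
def propSeq (G : SimpleGraph V) [DecidableRel G.Adj] : ℕ → V → V
  | 0 => id
  | (k + 1) => propStep G (propSeq G k)

/-- The minimum vertex over the ball of radius `k` around `v`: the minimum of the set of
vertices `u` joined to `v` by a walk in `G` of length at most `k`. -/
noncomputable def ballMin (G : SimpleGraph V) (k : ℕ) (v : V) : V :=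
  haveI : DecidablePred (fun u : V => ∃ p : G.Walk v u, p.length ≤ k) :=
    Classical.decPred _
  (Finset.univ.filter (fun u : V => ∃ p : G.Walk v u, p.length ≤ k)).min'
    ⟨v, Finset.mem_filter.mpr ⟨Finset.mem_univ v, SimpleGraph.Walk.nil, by simp⟩⟩

/-!
Splitting off the first edge of a walk writes the closed `(k + 1)`-ball around `v` as the union of
the closed `k`-balls around `v` and its neighbours. The least element of a union is the least of
the least elements, so ball minima obey the recursion that defines label propagation.
-/

theorem isLeast_biUnion_of_isLeast_image {ι α : Type*} [Preorder α] {s : Set ι} {t : ι → Set α}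
    {m : ι → α} {a : α} (ht : ∀ i ∈ s, IsLeast (t i) (m i)) (ha : IsLeast (m '' s) a) :
    IsLeast (⋃ i ∈ s, t i) a := by
  constructor
  · obtain ⟨i, hi, rfl⟩ := ha.1
    exact Set.mem_biUnion hi (ht i hi).1
  · intro b hb
    obtain ⟨i, hi, hbi⟩ := Set.mem_iUnion₂.mp hb
    exact (ha.2 (Set.mem_image_of_mem m hi)).trans ((ht i hi).2 hbi)

section Ball

variable {W : Type*} {G : SimpleGraph W}

theorem edist_le_natCast_iff_exists_walk {u v : W} {k : ℕ} :
    G.edist u v ≤ k ↔ ∃ p : G.Walk u v, p.length ≤ k := by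
  constructor
  · intro h
    obtain ⟨p, hp⟩ :=
      SimpleGraph.exists_walk_of_edist_ne_top (ne_top_of_le_ne_top (ENat.natCast_ne_top k) h)
    exact ⟨p, Nat.cast_le.mp (hp.trans_le h)⟩
  · rintro ⟨p, hp⟩
    exact p.edist_le.trans (Nat.cast_le.mpr hp)

/-- `SimpleGraph.ball` is open, so the ball of radius `k + 1` consists of the vertices at
distance at most `k`. -/
theorem mem_ball_natCast_add_one_iff_exists_walk {u v : W} {k : ℕ} :
    u ∈ G.ball v (k + 1) ↔ ∃ p : G.Walk v u, p.length ≤ k := by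
  rw [SimpleGraph.mem_ball_comm, SimpleGraph.mem_ball, ENat.lt_natCast_add_one_iff,
    edist_le_natCast_iff_exists_walk]

theorem ball_natCast_succ_add_one (k : ℕ) (v : W) :
    G.ball v ((k + 1 : ℕ) + 1) = ⋃ w ∈ insert v (G.neighborSet v), G.ball w (k + 1) := by
  ext u
  simp only [Set.biUnion_insert, Set.mem_union, Set.mem_iUnion₂,
    mem_ball_natCast_add_one_iff_exists_walk]
  constructor
  · rintro ⟨p, hp⟩
    cases p with
    | nil => exact .inl ⟨.nil, k.zero_le⟩
    | cons hadj q => exact .inr ⟨_, hadj, q, Nat.le_of_succ_le_succ hp⟩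
  · rintro (⟨p, hp⟩ | ⟨w, hadj, q, hq⟩)
    · exact ⟨p, hp.trans k.le_succ⟩
    · exact ⟨.cons hadj q, Nat.succ_le_succ hq⟩

end Ball

section LabelPropagation

omit [Nonempty V]

variable (G : SimpleGraph V)

theorem isLeast_propStep [DecidableRel G.Adj] (M : V → V) (v : V) :
    IsLeast (M '' insert v (G.neighborSet v)) (propStep G M v) := by
  rw [Set.image_insert_eq, ← G.coe_neighborFinset, ← Finset.coe_image, ← Finset.coe_insert]
  exact Finset.isLeast_min' _ _

theorem isLeast_propSeq [DecidableRel G.Adj] (k : ℕ) (v : V) :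
    IsLeast (G.ball v (k + 1)) (propSeq G k v) := by
  induction k generalizing v with
  | zero =>
    rw [Nat.cast_zero, zero_add, SimpleGraph.ball_one]
    exact isLeast_singleton
  | succ k ih =>
    rw [ball_natCast_succ_add_one]
    exact isLeast_biUnion_of_isLeast_image (fun w _ => ih w) (isLeast_propStep G (propSeq G k) v)

theorem isLeast_ballMin (k : ℕ) (v : V) : IsLeast (G.ball v (k + 1)) (ballMin G k v) := by
  classical
  have hball : G.ball v (k + 1) = {u | ∃ p : G.Walk v u, p.length ≤ k} :=
    Set.ext fun _ => mem_ball_natCast_add_one_iff_exists_walk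
  rw [hball, ← Finset.coe_filter_univ]
  exact Finset.isLeast_min' _ _

end LabelPropagation

/-- Ball formula for one-order label propagation: `M_k(v)` equals the minimum of the
set of vertices `u` reachable from `v` by a walk of length at most `k`. -/
theorem prop_ball_formula (G : SimpleGraph V) [DecidableRel G.Adj] :
    ∀ (k : ℕ) (v : V), propSeq G k v = ballMin G k v := fun k v =>
  (isLeast_propSeq G k v).unique (isLeast_ballMin G k v)
end

section
/- One-order label propagation converges in diameter-many iterations: suppose G is connected and d is a natural number such that every pair of vertices is joined by a path of length at most d. Then for every k ≥ d and every vertex v, M_k(v) equals the minimum vertex of V. -/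
variable {V : Type*} [Fintype V] [LinearOrder V] [Nonempty V]

section LabelPropagation

variable {α : Type*} [Fintype α] [LinearOrder α] {G : SimpleGraph α} [DecidableRel G.Adj]

theorem le_propStep_iff {M : α → α} {v w : α} :
    w ≤ propStep G M v ↔ w ≤ M v ∧ ∀ u, G.Adj v u → w ≤ M u := by
  simp [propStep, Finset.le_min'_iff]

/-- The universal property of the minimum of the ball of radius `k` around `v`; in this form no
vertex attaining the minimum has to be tracked through the induction. -/
theorem le_propSeq_iff {k : ℕ} {v w : α} :
    w ≤ propSeq G k v ↔ ∀ u (p : G.Walk v u), p.length ≤ k → w ≤ u := by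
  induction k generalizing v with
  | zero =>
    constructor
    · intro hw u p hp
      rwa [← p.eq_of_length_eq_zero (Nat.le_zero.mp hp)]
    · intro hw
      exact hw v .nil le_rfl
  | succ k ih =>
    rw [propSeq, le_propStep_iff]
    simp only [ih]
    constructor
    · rintro ⟨hv, hadj⟩ u (_ | ⟨h, q⟩) hp
      · exact hv v .nil k.zero_le
      · exact hadj _ h u q (Nat.le_of_succ_le_succ hp)
    · intro hw
      exact ⟨fun u p hp => hw u p (Nat.le_succ_of_le hp),
        fun x h u q hq => hw u (.cons h q) (Nat.succ_le_succ hq)⟩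

theorem prop_converges_in_diameter_general {v m : α} (hm : IsLeast {u | G.Reachable v u} m)
    {k : ℕ} (p : G.Walk v m) (hp : p.length ≤ k) :
    propSeq G k v = m :=
  le_antisymm (le_propSeq_iff.mp le_rfl m p hp)
    (le_propSeq_iff.mpr fun _ q _ => hm.2 q.reachable)

end LabelPropagation

/-- One-order label propagation converges in diameter-many iterations: if `G` is
connected and every pair of vertices is joined by a path of length at most `d`, then
for every `k ≥ d` and every vertex `v`, `M_k(v)` is the minimum vertex of `V`. -/
theorem prop_converges_in_diameter (G : SimpleGraph V) [DecidableRel G.Adj]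
    (hG : G.Connected) (d : ℕ)
    (hdiam : ∀ u v : V, ∃ p : G.Walk u v, p.length ≤ d) :
    ∀ k : ℕ, d ≤ k →
      ∀ v : V, propSeq G k v = (Finset.univ : Finset V).min' Finset.univ_nonempty := by
  intro k hk v
  obtain ⟨p, hp⟩ := hdiam v (Finset.univ.min' Finset.univ_nonempty)
  exact prop_converges_in_diameter_general
    ⟨p.reachable, fun u _ => Finset.min'_le _ u (Finset.mem_univ u)⟩ p (hp.trans hk)
end
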